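/- arXiv:1611.05563 — 2 statements merged into one kernel-verified Lean document; each statement's English description precedes it below -/
import Mathlib

section
/- Let n be a natural number and let q > 0 and p be real with p > n + 1. Then the function y ↦ y^{−(n+2)} (y^p S_p(y)/Γ(p) − 1) is Lebesgue-integrable on (0, ∞), and (Γ(p)/Γ(p−n−1)) · ∫_0^∞ y^{−(n+2)} (y^p S_p(y)/Γ(p) − 1) dy = − B_{n+1}(q)/(n+1), where B_{n+1} is the (n+1)-st Bernoulli polynomial in the convention B_1(x) = x − 1/2. In particular this n-th moment of the cusp density is independent of p. -/
open MeasureTheory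

/-!
Let `E_p(y) = S_p(y) - Γ(p) y^{-p}`. The normalized moment is
`Γ(b)⁻¹ ∫₀^∞ u^{b-1} E_p(u) du` with `b = p - n - 1`. Both terms of `E_p` are Laplace-type integrals
`∫ X^{p-1} e^{-Xy} dμ`, and on these Weyl's fractional integral lowers the exponent:
`∫₀^∞ u^{b-1} E_p(y + u) du = Γ(b) E_{p-b}(y)`. Letting `y → 0⁺` by dominated convergence, the
moment is the boundary value `E_{n+1}(0⁺)`, which does not involve `p`. At integer index,
`E_{n+1}(y) = -φ⁽ⁿ⁾(-y)` where `φ(z) = (G(z) - 1) / z` and `G(z) = z e^{qz} / (e^z - 1)` generates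
the Bernoulli polynomials, so `E_{n+1}(0⁺) = -B_{n+1}(q) / (n + 1)`.

The dominating bound `|E_p(y)| ≤ C (1 + y)^{-p}` is read off from the limits at `0` and `∞` when `p`
is a positive integer, and is carried to real `p` by the fractional integral itself.
-/

open Filter Set Topology

section DividedSlope

variable {𝕜 : Type*} [NontriviallyNormedField 𝕜]

lemma analyticAt_dslope {E : Type*} [NormedAddCommGroup E] [NormedSpace 𝕜 E] {f : 𝕜 → E}
    {a b : 𝕜} (hb : AnalyticAt 𝕜 f b) : AnalyticAt 𝕜 (dslope f a) b := by
  rcases eq_or_ne b a with rfl | hba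
  · obtain ⟨P, hP⟩ := hb
    exact ⟨P.fslope, hP.has_fpower_series_dslope_fslope⟩
  · have hslope : AnalyticAt 𝕜 (fun z ↦ (z - a)⁻¹ • (f z - f a)) b :=
      ((analyticAt_id.sub analyticAt_const).inv (sub_ne_zero.2 hba)).smul (hb.sub analyticAt_const)
    exact hslope.congr (dslope_eventuallyEq_slope_of_ne f hba).symm

lemma iteratedDeriv_dslope_self [CompleteSpace 𝕜] [CharZero 𝕜] {f : 𝕜 → 𝕜} {a : 𝕜}
    (hf : AnalyticAt 𝕜 f a) (n : ℕ) :
    iteratedDeriv n (dslope f a) a = iteratedDeriv (n + 1) f a / (n + 1) := by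
  have hseries := (analyticAt_dslope hf).hasFPowerSeriesAt.eq_formalMultilinearSeries
    hf.hasFPowerSeriesAt.has_fpower_series_dslope_fslope
  have hcoeff := congrArg (fun P ↦ P.coeff n) hseries
  simp only [FormalMultilinearSeries.coeff_fslope, FormalMultilinearSeries.coeff_ofScalars,
    Nat.factorial_succ, Nat.cast_mul, Nat.cast_succ] at hcoeff
  have hfact : (n.factorial : 𝕜) ≠ 0 := Nat.cast_ne_zero.2 n.factorial_ne_zero
  have hsucc : (n : 𝕜) + 1 ≠ 0 := Nat.cast_add_one_ne_zero n
  field_simp at hcoeff ⊢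
  exact hcoeff

end DividedSlope

section BernoulliGenerating

lemma eq_aeval_bernoulli_of_sum_choose_mul {K : Type*} [Field K] [CharZero K] {q : K} {c : ℕ → K}
    (hc : ∀ n : ℕ, ∑ k ∈ Finset.range (n + 1), ((n + 1).choose k : K) * c k = (n + 1) * q ^ n)
    (n : ℕ) :
    c n = Polynomial.aeval q (Polynomial.bernoulli n) := by
  induction n using Nat.strong_induction_on with
  | _ n ih =>
    have hB : ∑ k ∈ Finset.range (n + 1),
        ((n + 1).choose k : K) * Polynomial.aeval q (Polynomial.bernoulli k) = (n + 1) * q ^ n := by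
      simpa [add_mul, Polynomial.aeval_monomial, Nat.cast_smul_eq_nsmul] using
        congrArg (Polynomial.aeval q) (Polynomial.sum_bernoulli n)
    rw [← hc n, Finset.sum_range_succ, Finset.sum_range_succ,
      Finset.sum_congr rfl fun k hk ↦ by rw [← ih k (Finset.mem_range.1 hk)], add_right_inj,
      Nat.choose_succ_self_right] at hB
    exact (mul_left_cancel₀ (Nat.cast_ne_zero.2 n.succ_ne_zero) hB).symm

/-- The generating function `z e^{qz} / (e^z - 1)` of the Bernoulli polynomials at `q`; writing the
denominator as a divided slope of `exp` gives it the right value `1` at `z = 0`. -/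
noncomputable def bernoulliGenerating (q z : ℝ) : ℝ :=
  Real.exp (q * z) / dslope Real.exp 0 z

lemma dslope_exp_zero_pos (z : ℝ) : 0 < dslope Real.exp 0 z := by
  rcases eq_or_ne z 0 with rfl | hz
  · simp
  · rw [dslope_of_ne _ hz]
    exact (Real.exp_strictMono.strictMonoOn univ).slope_pos (mem_univ _) (mem_univ _) hz.symm

lemma analyticAt_bernoulliGenerating (q z : ℝ) : AnalyticAt ℝ (bernoulliGenerating q) z := by
  have hexp : AnalyticAt ℝ (fun z ↦ Real.exp (q * z)) z := by fun_prop
  exact hexp.div (analyticAt_dslope analyticAt_rexp) (dslope_exp_zero_pos z).ne'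

lemma bernoulliGenerating_zero (q : ℝ) : bernoulliGenerating q 0 = 1 := by
  simp [bernoulliGenerating]

lemma bernoulliGenerating_of_ne_zero (q : ℝ) {z : ℝ} (hz : z ≠ 0) :
    bernoulliGenerating q z = z * Real.exp (q * z) / (Real.exp z - 1) := by
  rw [bernoulliGenerating, dslope_of_ne _ hz, slope_def_field, Real.exp_zero, sub_zero,
    div_div_eq_mul_div, mul_comm]

lemma iteratedDeriv_dslope_exp_zero (n : ℕ) :
    iteratedDeriv n (dslope Real.exp 0) 0 = 1 / (n + 1) := by
  rw [iteratedDeriv_dslope_self analyticAt_rexp, iteratedDeriv_eq_iterate, Real.iter_deriv_exp,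
    Real.exp_zero]

lemma iteratedDeriv_bernoulliGenerating_zero (q : ℝ) (n : ℕ) :
    iteratedDeriv n (bernoulliGenerating q) 0 =
      Polynomial.aeval q (Polynomial.bernoulli n) := by
  refine eq_aeval_bernoulli_of_sum_choose_mul
    (c := fun k ↦ iteratedDeriv k (bernoulliGenerating q) 0) (fun n ↦ ?_) n
  have hprod : (fun z ↦ bernoulliGenerating q z * dslope Real.exp 0 z) =
      fun z ↦ Real.exp (q * z) :=
    funext fun z ↦ div_mul_cancel₀ _ (dslope_exp_zero_pos z).ne'
  have hLeibniz := congrArg (fun f ↦ iteratedDeriv n f 0) hprod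
  simp only [iteratedDeriv_fun_mul (analyticAt_bernoulliGenerating q 0).contDiffAt
    (analyticAt_dslope analyticAt_rexp).contDiffAt, iteratedDeriv_exp_const_mul,
    iteratedDeriv_dslope_exp_zero, mul_zero, Real.exp_zero, mul_one] at hLeibniz
  rw [← hLeibniz, Finset.mul_sum]
  refine Finset.sum_congr rfl fun k hk ↦ ?_
  have hkn : k ≤ n := Finset.mem_range_succ_iff.1 hk
  have hchoose : (n.choose k : ℝ) * (n + 1) = (n + 1).choose k * ((n - k : ℕ) + 1) := by
    rw [← Nat.cast_add_one, ← Nat.cast_add_one, ← Nat.sub_add_comm hkn]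
    exact_mod_cast Nat.choose_mul_succ_eq n k
  have hpos : ((n - k : ℕ) : ℝ) + 1 ≠ 0 := by positivity
  field_simp
  linear_combination -(iteratedDeriv k (bernoulliGenerating q) 0) * hchoose

end BernoulliGenerating

lemma exists_norm_le_of_tendsto_nhdsGT_of_tendsto_atTop {E : Type*}
    [SeminormedAddCommGroup E] {f : ℝ → E} {a : ℝ} {b c : E} (hf : ContinuousOn f (Ioi a))
    (ha : Tendsto f (𝓝[>] a) (𝓝 b)) (htop : Tendsto f atTop (𝓝 c)) :
    ∃ C, ∀ x ∈ Ioi a, ‖f x‖ ≤ C := by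
  obtain ⟨A, hA⟩ := ha.norm.isBoundedUnder_le
  obtain ⟨B, hB⟩ := htop.norm.isBoundedUnder_le
  rw [eventually_map] at hA hB
  obtain ⟨u, hau, hu⟩ := mem_nhdsGT_iff_exists_Ioo_subset.1 hA
  obtain ⟨v, hv⟩ := eventually_atTop.1 hB
  obtain ⟨M, hM⟩ := (isCompact_Icc (a := u) (b := v)).exists_bound_of_continuousOn
    (hf.mono fun x hx ↦ lt_of_lt_of_le hau hx.1)
  refine ⟨max A (max M B), fun x hx ↦ ?_⟩
  rcases lt_or_ge x u with hxu | hux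
  · exact le_max_of_le_left (hu ⟨hx, hxu⟩)
  · rcases le_total x v with hxv | hvx
    · exact le_max_of_le_right (le_max_of_le_left (hM x ⟨hux, hxv⟩))
    · exact le_max_of_le_right (le_max_of_le_right (hv x hvx))

lemma integrableOn_rpow_mul_exp_neg_mul_Ioi {p y : ℝ} (hp : 0 < p) (hy : 0 < y) :
    IntegrableOn (fun x ↦ x ^ (p - 1) * Real.exp (-(x * y))) (Ioi 0) := by
  simpa [mul_comm y] using
    integrableOn_rpow_mul_exp_neg_mul_rpow (s := p - 1) (p := 1) (by linarith) one_pos hy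

section LaplaceRpow

/-- The Laplace-type integral `∫ X^{p-1} e^{-Xy} dμ`. Counting measure on `ℕ` with `X m = m + q`
gives the Lerch series, Lebesgue measure on `(0, ∞)` with `X x = x` gives `Γ(p) y^{-p}`. -/
noncomputable def laplaceRpow {α : Type*} [MeasurableSpace α] (μ : Measure α) (X : α → ℝ)
    (p y : ℝ) : ℝ :=
  ∫ x, X x ^ (p - 1) * Real.exp (-(X x * y)) ∂μ

variable {α : Type*} [MeasurableSpace α] {μ : Measure α} {X : α → ℝ} {p b y : ℝ}

lemma integral_rpow_mul_rpow_mul_exp_neg_mul_add (hb : 0 < b) {r : ℝ} (hr : 0 < r) :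
    ∫ u in Ioi (0 : ℝ), u ^ (b - 1) * (r ^ (p + b - 1) * Real.exp (-(r * (y + u)))) =
      Real.Gamma b * (r ^ (p - 1) * Real.exp (-(r * y))) := by
  have hsplit (u : ℝ) : u ^ (b - 1) * (r ^ (p + b - 1) * Real.exp (-(r * (y + u)))) =
      r ^ (p + b - 1) * Real.exp (-(r * y)) * (u ^ (b - 1) * Real.exp (-(r * u))) := by
    rw [mul_add, neg_add, Real.exp_add]
    ring
  simp only [hsplit]
  rw [integral_const_mul, Real.integral_rpow_mul_exp_neg_mul_Ioi hb hr, one_div,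
    Real.inv_rpow hr.le, show p + b - 1 = p - 1 + b by ring, Real.rpow_add hr]
  field_simp

lemma integrable_prod_rpow_mul_exp_neg_mul_add (hX : Measurable X) (hpos : ∀ᵐ x ∂μ, 0 < X x)
    (hb : 0 < b) (hint : Integrable (fun x ↦ X x ^ (p - 1) * Real.exp (-(X x * y))) μ) :
    Integrable (Function.uncurry fun x u ↦
        u ^ (b - 1) * (X x ^ (p + b - 1) * Real.exp (-(X x * (y + u)))))
      (μ.prod (volume.restrict (Ioi 0))) := by
  refine (integrable_prod_iff (by fun_prop)).2 ⟨?_, ?_⟩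
  · filter_upwards [hpos] with x hx
    refine ((integrableOn_rpow_mul_exp_neg_mul_Ioi hb hx).const_mul
      (X x ^ (p + b - 1) * Real.exp (-(X x * y)))).congr (ae_of_all _ fun u ↦ ?_)
    simp only [Function.uncurry, mul_add, neg_add, Real.exp_add, mul_comm u (X x)]
    ring
  · refine (hint.const_mul (Real.Gamma b)).congr ?_
    filter_upwards [hpos] with x hx
    rw [← integral_rpow_mul_rpow_mul_exp_neg_mul_add hb hx]
    refine setIntegral_congr_fun measurableSet_Ioi fun u hu ↦ (Real.norm_of_nonneg ?_).symm
    have hu : 0 < u := hu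
    positivity

lemma integrableOn_rpow_mul_laplaceRpow_add [SFinite μ] (hX : Measurable X)
    (hpos : ∀ᵐ x ∂μ, 0 < X x) (hb : 0 < b)
    (hint : Integrable (fun x ↦ X x ^ (p - 1) * Real.exp (-(X x * y))) μ) :
    IntegrableOn (fun u ↦ u ^ (b - 1) * laplaceRpow μ X (p + b) (y + u)) (Ioi 0) := by
  simpa only [IntegrableOn, laplaceRpow, Function.uncurry, integral_const_mul] using
    (integrable_prod_rpow_mul_exp_neg_mul_add hX hpos hb hint).integral_prod_right

lemma integral_rpow_mul_laplaceRpow_add [SFinite μ] (hX : Measurable X)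
    (hpos : ∀ᵐ x ∂μ, 0 < X x) (hb : 0 < b)
    (hint : Integrable (fun x ↦ X x ^ (p - 1) * Real.exp (-(X x * y))) μ) :
    ∫ u in Ioi 0, u ^ (b - 1) * laplaceRpow μ X (p + b) (y + u) =
      Real.Gamma b * laplaceRpow μ X p y := by
  have hswap := integral_integral_swap (integrable_prod_rpow_mul_exp_neg_mul_add hX hpos hb hint)
  simp only [integral_const_mul] at hswap
  simp only [laplaceRpow]
  rw [← hswap, ← integral_const_mul]
  refine integral_congr_ae ?_
  filter_upwards [hpos] with x hx using integral_rpow_mul_rpow_mul_exp_neg_mul_add hb hx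

end LaplaceRpow

section GammaMulRpow

variable {p b y : ℝ}

lemma laplaceRpow_volume_restrict_Ioi (hp : 0 < p) (hy : 0 < y) :
    laplaceRpow (volume.restrict (Ioi 0)) (fun x ↦ x) p y = Real.Gamma p * y ^ (-p) := by
  simp only [laplaceRpow, mul_comm _ y]
  rw [Real.integral_rpow_mul_exp_neg_mul_Ioi hp hy, one_div, Real.inv_rpow hy.le,
    Real.rpow_neg hy.le, mul_comm]

lemma integrableOn_rpow_mul_Gamma_mul_add_rpow_neg (hp : 0 < p) (hb : 0 < b) (hy : 0 < y) :
    IntegrableOn (fun u ↦ u ^ (b - 1) * (Real.Gamma (p + b) * (y + u) ^ (-(p + b)))) (Ioi 0) := by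
  refine (integrableOn_rpow_mul_laplaceRpow_add (μ := volume.restrict (Ioi 0)) measurable_id'
    (ae_restrict_mem measurableSet_Ioi) hb
    (integrableOn_rpow_mul_exp_neg_mul_Ioi hp hy)).congr_fun (fun u hu ↦ ?_)
    measurableSet_Ioi
  exact congrArg _ (laplaceRpow_volume_restrict_Ioi (add_pos hp hb) (add_pos hy hu))

lemma integral_rpow_mul_Gamma_mul_add_rpow_neg (hp : 0 < p) (hb : 0 < b) (hy : 0 < y) :
    ∫ u in Ioi (0 : ℝ), u ^ (b - 1) * (Real.Gamma (p + b) * (y + u) ^ (-(p + b))) =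
      Real.Gamma b * (Real.Gamma p * y ^ (-p)) := by
  rw [← laplaceRpow_volume_restrict_Ioi hp hy,
    ← integral_rpow_mul_laplaceRpow_add (μ := volume.restrict (Ioi 0)) measurable_id'
    (ae_restrict_mem measurableSet_Ioi) hb
    (integrableOn_rpow_mul_exp_neg_mul_Ioi hp hy)]
  refine setIntegral_congr_fun measurableSet_Ioi fun u hu ↦ ?_
  exact congrArg _ (laplaceRpow_volume_restrict_Ioi (add_pos hp hb) (add_pos hy hu)).symm

lemma integrableOn_rpow_mul_one_add_rpow_neg (hp : 0 < p) (hb : 0 < b) :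
    IntegrableOn (fun u : ℝ ↦ u ^ (b - 1) * (1 + u) ^ (-(p + b))) (Ioi 0) := by
  have hG : Real.Gamma (p + b) ≠ 0 := (Real.Gamma_pos_of_pos (add_pos hp hb)).ne'
  refine ((integrableOn_rpow_mul_Gamma_mul_add_rpow_neg hp hb one_pos).const_mul
    (Real.Gamma (p + b))⁻¹).congr (ae_of_all _ fun u ↦ ?_)
  field_simp

end GammaMulRpow

section LerchSum

/-- The series `S_p(y) = ∑ (m + q)^{p-1} e^{-(m+q)y}`, equal to `e^{-qy} Φ(e^{-y}, 1-p, q)` for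
`y > 0`. -/
noncomputable def lerchSum (q p y : ℝ) : ℝ :=
  ∑' m : ℕ, ((m : ℝ) + q) ^ (p - 1) * Real.exp (-(((m : ℝ) + q) * y))

variable {q y : ℝ}

lemma summable_rpow_mul_exp_neg_natCast_add_mul (q s : ℝ) (hy : 0 < y) :
    Summable fun m : ℕ ↦ ((m : ℝ) + q) ^ s * Real.exp (-(((m : ℝ) + q) * y)) := by
  have hdecay : (fun x : ℝ ↦ x ^ s * Real.exp (-(x * y))) =O[atTop] fun x ↦ x ^ (-2 : ℝ) := by
    refine ((Asymptotics.isBigO_refl (fun x : ℝ ↦ x ^ s) atTop).mul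
      (isLittleO_exp_neg_mul_rpow_atTop hy (-2 - s)).isBigO).congr' ?_ ?_
    · exact .of_forall fun x ↦ by simp only [neg_mul, mul_comm y]
    · filter_upwards [eventually_gt_atTop 0] with x hx
      rw [← Real.rpow_add hx, add_sub_cancel]
  have hshift : Tendsto (fun m : ℕ ↦ (m : ℝ) + q) atTop atTop :=
    tendsto_atTop_add_const_right _ _ tendsto_natCast_atTop_atTop
  refine summable_of_isBigO_nat ((Real.summable_one_div_nat_add_rpow q 2).2 one_lt_two)
    ((hdecay.comp_tendsto hshift).congr' .rfl ?_)
  filter_upwards [hshift.eventually_gt_atTop 0] with m hm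
  rw [Function.comp_apply, Real.rpow_neg hm.le, abs_of_pos hm, one_div]

lemma hasDerivAt_lerchSum (hq : 0 < q) (p : ℝ) (hy : 0 < y) :
    HasDerivAt (lerchSum q p) (-lerchSum q (p + 1) y) y := by
  have hne (m : ℕ) : (m : ℝ) + q ≠ 0 := by positivity
  have hy2 : y ∈ Ioi (y / 2) := half_lt_self hy
  have hsum : HasDerivAt (lerchSum q p)
      (∑' m : ℕ, -(((m : ℝ) + q) ^ (p + 1 - 1) * Real.exp (-(((m : ℝ) + q) * y)))) y := by
    refine hasDerivAt_tsum_of_isPreconnected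
      (g := fun (m : ℕ) z ↦ ((m : ℝ) + q) ^ (p - 1) * Real.exp (-(((m : ℝ) + q) * z)))
      (g' := fun (m : ℕ) z ↦ -(((m : ℝ) + q) ^ (p + 1 - 1) * Real.exp (-(((m : ℝ) + q) * z))))
      (summable_rpow_mul_exp_neg_natCast_add_mul q (p + 1 - 1) (half_pos hy))
      isOpen_Ioi isPreconnected_Ioi (fun m z _ ↦ ?_) (fun m z hz ↦ ?_) hy2
      (summable_rpow_mul_exp_neg_natCast_add_mul q (p - 1) hy) hy2
    · refine ((((hasDerivAt_id z).const_mul ((m : ℝ) + q)).fun_neg.exp).const_mul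
        (((m : ℝ) + q) ^ (p - 1))).congr_deriv ?_
      rw [add_sub_right_comm, Real.rpow_add_one (hne m)]
      simp only [id, mul_one]
      ring
    · rw [norm_neg, Real.norm_of_nonneg (by positivity)]
      gcongr
      exact (mem_Ioi.1 hz).le
  rwa [tsum_neg] at hsum

lemma lerchSum_one (q : ℝ) (hy : 0 < y) :
    lerchSum q 1 y = Real.exp (-(q * y)) / (1 - Real.exp (-y)) := by
  have hterm (m : ℕ) : ((m : ℝ) + q) ^ (1 - 1 : ℝ) * Real.exp (-(((m : ℝ) + q) * y)) =
      Real.exp (-(q * y)) * Real.exp (-y) ^ m := by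
    rw [sub_self, Real.rpow_zero, one_mul, ← Real.exp_nat_mul, ← Real.exp_add]
    ring_nf
  simp only [lerchSum, hterm]
  rw [tsum_mul_left, tsum_geometric_of_lt_one (Real.exp_pos _).le
    (Real.exp_lt_one_iff.2 (neg_neg_of_pos hy)), div_eq_mul_inv]

lemma lerchSum_nonneg (hq : 0 < q) (p y : ℝ) : 0 ≤ lerchSum q p y :=
  tsum_nonneg fun m ↦ by positivity

lemma lerchSum_le_exp_mul (hq : 0 < q) (p : ℝ) (hy : 1 ≤ y) :
    lerchSum q p y ≤ Real.exp (-(q * (y - 1))) * lerchSum q p 1 := by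
  rw [lerchSum, lerchSum, ← tsum_mul_left]
  refine (summable_rpow_mul_exp_neg_natCast_add_mul q (p - 1) (by positivity)).tsum_le_tsum
    (fun m ↦ ?_) ((summable_rpow_mul_exp_neg_natCast_add_mul q (p - 1) one_pos).mul_left _)
  rw [mul_left_comm, ← Real.exp_add]
  gcongr
  nlinarith [mul_nonneg (m.cast_nonneg : (0 : ℝ) ≤ m) (sub_nonneg.2 hy)]

lemma tendsto_rpow_mul_lerchSum_atTop (hq : 0 < q) (p s : ℝ) :
    Tendsto (fun y ↦ y ^ s * lerchSum q p y) atTop (𝓝 0) := by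
  have hdecay : Tendsto (fun y ↦ y ^ s * Real.exp (-q * y) * (Real.exp q * lerchSum q p 1))
      atTop (𝓝 0) := by
    simpa using (tendsto_rpow_mul_exp_neg_mul_atTop_nhds_zero s q hq).mul_const
      (Real.exp q * lerchSum q p 1)
  refine squeeze_zero' ?_ ?_ hdecay
  · filter_upwards [eventually_ge_atTop 0] with y hy
    exact mul_nonneg (Real.rpow_nonneg hy s) (lerchSum_nonneg hq p y)
  · filter_upwards [eventually_ge_atTop 1] with y hy
    calc y ^ s * lerchSum q p y
        ≤ y ^ s * (Real.exp (-(q * (y - 1))) * lerchSum q p 1) := by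
          gcongr
          exact lerchSum_le_exp_mul hq p hy
      _ = y ^ s * Real.exp (-q * y) * (Real.exp q * lerchSum q p 1) := by
          rw [show -(q * (y - 1)) = -q * y + q by ring, Real.exp_add]
          ring

lemma integrable_count_rpow_mul_exp_neg_natCast_add_mul (q s : ℝ) (hy : 0 < y) :
    Integrable (fun m : ℕ ↦ ((m : ℝ) + q) ^ s * Real.exp (-(((m : ℝ) + q) * y))) .count :=
  integrable_count_iff.2 (summable_rpow_mul_exp_neg_natCast_add_mul q s hy).norm

lemma laplaceRpow_count (q p : ℝ) (hy : 0 < y) :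
    laplaceRpow .count (fun m : ℕ ↦ (m : ℝ) + q) p y = lerchSum q p y := by
  rw [laplaceRpow,
    integral_countable (integrable_count_rpow_mul_exp_neg_natCast_add_mul q (p - 1) hy)]
  simp [lerchSum]

lemma integrableOn_rpow_mul_lerchSum_add (hq : 0 < q) (p : ℝ) {b : ℝ} (hb : 0 < b) (hy : 0 < y) :
    IntegrableOn (fun u ↦ u ^ (b - 1) * lerchSum q (p + b) (y + u)) (Ioi 0) := by
  refine (integrableOn_rpow_mul_laplaceRpow_add (measurable_of_countable _)
    (ae_of_all _ fun m ↦ by positivity) hb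
    (integrable_count_rpow_mul_exp_neg_natCast_add_mul q (p - 1) hy)).congr_fun (fun u hu ↦ ?_)
    measurableSet_Ioi
  exact congrArg _ (laplaceRpow_count q (p + b) (add_pos hy hu))

lemma integral_rpow_mul_lerchSum_add (hq : 0 < q) (p : ℝ) {b : ℝ} (hb : 0 < b) (hy : 0 < y) :
    ∫ u in Ioi (0 : ℝ), u ^ (b - 1) * lerchSum q (p + b) (y + u) =
      Real.Gamma b * lerchSum q p y := by
  rw [← laplaceRpow_count q p hy, ← integral_rpow_mul_laplaceRpow_add (measurable_of_countable _)
    (ae_of_all _ fun m ↦ by positivity) hb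
    (integrable_count_rpow_mul_exp_neg_natCast_add_mul q (p - 1) hy)]
  refine setIntegral_congr_fun measurableSet_Ioi fun u hu ↦ ?_
  exact congrArg _ (laplaceRpow_count q (p + b) (add_pos hy hu)).symm

end LerchSum

section LerchExcess

/-- The excess `S_p(y) - Γ(p) y^{-p}` of the Lerch series over its leading singularity at the
cusp `y = 0`. -/
noncomputable def lerchExcess (q p y : ℝ) : ℝ :=
  lerchSum q p y - Real.Gamma p * y ^ (-p)

variable {q p b y : ℝ}

lemma hasDerivAt_lerchExcess (hq : 0 < q) (hp : 0 < p) (hy : 0 < y) :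
    HasDerivAt (lerchExcess q p) (-lerchExcess q (p + 1) y) y := by
  have hpower := (Real.hasDerivAt_rpow_const (p := -p) (Or.inl hy.ne')).const_mul (Real.Gamma p)
  refine ((hasDerivAt_lerchSum hq p hy).sub hpower).congr_deriv ?_
  rw [lerchExcess, Real.Gamma_add_one hp.ne', neg_add']
  ring

lemma continuousOn_lerchExcess (hq : 0 < q) (hp : 0 < p) :
    ContinuousOn (lerchExcess q p) (Ioi 0) :=
  fun _ hy ↦ (hasDerivAt_lerchExcess hq hp hy).continuousAt.continuousWithinAt

lemma lerchExcess_one (q : ℝ) (hy : 0 < y) :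
    lerchExcess q 1 y = -dslope (bernoulliGenerating q) 0 (-y) := by
  have hy0 : -y ≠ 0 := neg_ne_zero.2 hy.ne'
  have hexp : 1 - Real.exp (-y) ≠ 0 := (sub_pos.2 (Real.exp_lt_one_iff.2 (neg_neg_of_pos hy))).ne'
  have hexp' : Real.exp (-y) - 1 ≠ 0 := by rwa [← neg_ne_zero, neg_sub]
  rw [lerchExcess, lerchSum_one q hy, Real.Gamma_one, Real.rpow_neg_one, dslope_of_ne _ hy0,
    slope_def_field, bernoulliGenerating_zero, bernoulliGenerating_of_ne_zero q hy0, mul_neg]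
  field_simp
  ring

lemma contDiff_dslope_bernoulliGenerating (q : ℝ) {n : WithTop ℕ∞} :
    ContDiff ℝ n (dslope (bernoulliGenerating q) 0) :=
  contDiff_iff_contDiffAt.2 fun z ↦
    (analyticAt_dslope (analyticAt_bernoulliGenerating q z)).contDiffAt

lemma lerchExcess_natCast_add_one (hq : 0 < q) (n : ℕ) (hy : 0 < y) :
    lerchExcess q (n + 1) y = -iteratedDeriv n (dslope (bernoulliGenerating q) 0) (-y) := by
  induction n generalizing y with
  | zero => simpa using lerchExcess_one q hy
  | succ n ih =>
    have hleft := hasDerivAt_lerchExcess hq (p := n + 1) (by positivity) hy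
    have hdiff := (contDiff_dslope_bernoulliGenerating q (n := ⊤)).differentiable_iteratedDeriv n
      (WithTop.coe_lt_top _)
    have hright := ((hdiff (-y)).hasDerivAt.comp y (hasDerivAt_neg y)).neg
    have heq : lerchExcess q (n + 1) =ᶠ[𝓝 y]
        fun z ↦ -iteratedDeriv n (dslope (bernoulliGenerating q) 0) (-z) := by
      filter_upwards [Ioi_mem_nhds hy] with z hz using ih hz
    have hderiv := hleft.unique (hright.congr_of_eventuallyEq heq)
    rw [← iteratedDeriv_succ, mul_neg_one, neg_neg] at hderiv
    rw [Nat.cast_add_one, ← hderiv, neg_neg]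

lemma tendsto_lerchExcess_natCast_add_one (hq : 0 < q) (n : ℕ) :
    Tendsto (lerchExcess q (n + 1)) (𝓝[>] 0)
      (𝓝 (-Polynomial.aeval q (Polynomial.bernoulli (n + 1)) / (n + 1))) := by
  have hcont : Continuous fun y ↦ -iteratedDeriv n (dslope (bernoulliGenerating q) 0) (-y) :=
    (((contDiff_dslope_bernoulliGenerating q (n := ⊤)).continuous_iteratedDeriv n le_top).comp
      continuous_neg).neg
  have hlim := (hcont.tendsto 0).mono_left (nhdsWithin_le_nhds (s := Ioi 0))
  rw [neg_zero, iteratedDeriv_dslope_self (analyticAt_bernoulliGenerating q 0),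
    iteratedDeriv_bernoulliGenerating_zero, ← neg_div] at hlim
  refine hlim.congr' ?_
  filter_upwards [self_mem_nhdsWithin] with y hy using (lerchExcess_natCast_add_one hq n hy).symm

lemma tendsto_one_add_rpow_mul_lerchExcess_atTop (hq : 0 < q) (p : ℝ) :
    Tendsto (fun y ↦ (1 + y) ^ p * lerchExcess q p y) atTop (𝓝 (-Real.Gamma p)) := by
  have hratio : Tendsto (fun y : ℝ ↦ (y⁻¹ + 1) ^ p) atTop (𝓝 1) := by
    simpa using (tendsto_inv_atTop_zero.add_const 1).rpow_const (p := p) (by simp)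
  have hlim := hratio.mul ((tendsto_rpow_mul_lerchSum_atTop hq p p).sub_const (Real.Gamma p))
  rw [zero_sub, one_mul] at hlim
  refine hlim.congr' ?_
  filter_upwards [eventually_gt_atTop 0] with y hy
  have hone : 1 + y = (y⁻¹ + 1) * y := by field_simp
  have hpow : y ^ p ≠ 0 := (Real.rpow_pos_of_pos hy p).ne'
  rw [hone, Real.mul_rpow (by positivity) hy.le, lerchExcess, Real.rpow_neg hy.le]
  field_simp

lemma exists_abs_lerchExcess_natCast_add_one_le (hq : 0 < q) (n : ℕ) :
    ∃ C, ∀ y, 0 < y → |lerchExcess q (n + 1) y| ≤ C * (1 + y) ^ (-(n + 1 : ℝ)) := by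
  have hbase : Continuous fun y : ℝ ↦ (1 + y) ^ (n + 1 : ℝ) :=
    (continuous_const.add continuous_id).rpow_const fun _ ↦ Or.inr (by positivity)
  obtain ⟨C, hC⟩ := exists_norm_le_of_tendsto_nhdsGT_of_tendsto_atTop
    (hbase.continuousOn.mul (continuousOn_lerchExcess hq (by positivity)))
    (((hbase.tendsto 0).mono_left nhdsWithin_le_nhds).mul
      (tendsto_lerchExcess_natCast_add_one hq n))
    (tendsto_one_add_rpow_mul_lerchExcess_atTop hq (n + 1))
  refine ⟨C, fun y hy ↦ ?_⟩
  have hpos : 0 < 1 + y := add_pos one_pos hy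
  have hpow : 0 < (1 + y) ^ (n + 1 : ℝ) := Real.rpow_pos_of_pos hpos _
  rw [Real.rpow_neg hpos.le, ← div_eq_mul_inv, le_div_iff₀' hpow]
  simpa only [Pi.mul_apply, norm_mul, Real.norm_eq_abs, abs_of_pos hpow] using hC y hy

lemma integral_rpow_mul_lerchExcess_add (hq : 0 < q) (hp : 0 < p) (hb : 0 < b) (hy : 0 < y) :
    ∫ u in Ioi (0 : ℝ), u ^ (b - 1) * lerchExcess q (p + b) (y + u) =
      Real.Gamma b * lerchExcess q p y := by
  simp only [lerchExcess, mul_sub]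
  rw [integral_sub (integrableOn_rpow_mul_lerchSum_add hq p hb hy)
    (integrableOn_rpow_mul_Gamma_mul_add_rpow_neg hp hb hy),
    integral_rpow_mul_lerchSum_add hq p hb hy, integral_rpow_mul_Gamma_mul_add_rpow_neg hp hb hy]

lemma exists_abs_lerchExcess_le_of_add {C : ℝ} (hq : 0 < q) (hp : 0 < p) (hb : 0 < b)
    (hC : ∀ y, 0 < y → |lerchExcess q (p + b) y| ≤ C * (1 + y) ^ (-(p + b))) :
    ∃ D, ∀ y, 0 < y → |lerchExcess q p y| ≤ D * (1 + y) ^ (-p) := by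
  have hGpb : Real.Gamma (p + b) ≠ 0 := (Real.Gamma_pos_of_pos (add_pos hp hb)).ne'
  have hGb : 0 < Real.Gamma b := Real.Gamma_pos_of_pos hb
  refine ⟨C / Real.Gamma (p + b) * Real.Gamma p, fun y hy ↦ ?_⟩
  have hy1 : 0 < 1 + y := add_pos one_pos hy
  have hbound := norm_integral_le_of_norm_le (μ := volume.restrict (Ioi 0))
    (f := fun u ↦ u ^ (b - 1) * lerchExcess q (p + b) (y + u))
    ((integrableOn_rpow_mul_Gamma_mul_add_rpow_neg hp hb hy1).const_mul (C / Real.Gamma (p + b))) ?_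
  · rw [integral_rpow_mul_lerchExcess_add hq hp hb hy, integral_const_mul,
      integral_rpow_mul_Gamma_mul_add_rpow_neg hp hb hy1, norm_mul, Real.norm_of_nonneg hGb.le,
      mul_left_comm] at hbound
    simpa only [mul_assoc, Real.norm_eq_abs] using le_of_mul_le_mul_left hbound hGb
  · refine (ae_restrict_iff' measurableSet_Ioi).2 (ae_of_all _ fun u hu ↦ ?_)
    have hu0 : 0 ≤ u ^ (b - 1) := Real.rpow_nonneg (le_of_lt hu) _
    calc ‖u ^ (b - 1) * lerchExcess q (p + b) (y + u)‖
        = u ^ (b - 1) * |lerchExcess q (p + b) (y + u)| := by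
          rw [norm_mul, Real.norm_of_nonneg hu0, Real.norm_eq_abs]
      _ ≤ u ^ (b - 1) * (C * (1 + (y + u)) ^ (-(p + b))) := by
          gcongr
          exact hC _ (add_pos hy hu)
      _ = C / Real.Gamma (p + b) *
            (u ^ (b - 1) * (Real.Gamma (p + b) * (1 + y + u) ^ (-(p + b)))) := by
          rw [← add_assoc]
          field_simp

lemma exists_abs_lerchExcess_le (hq : 0 < q) (hp : 0 < p) :
    ∃ C, ∀ y, 0 < y → |lerchExcess q p y| ≤ C * (1 + y) ^ (-p) := by
  obtain ⟨n, hn⟩ := exists_nat_gt p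
  obtain ⟨C, hC⟩ := exists_abs_lerchExcess_natCast_add_one_le hq n
  have hb : 0 < n + 1 - p := by linarith
  exact exists_abs_lerchExcess_le_of_add hq hp hb (by simpa only [add_sub_cancel] using hC)

lemma exists_norm_rpow_mul_lerchExcess_add_le (hq : 0 < q) (hp : 0 < p) (s : ℝ) :
    ∃ C, ∀ u, 0 < u → ∀ y, 0 ≤ y →
      ‖u ^ s * lerchExcess q p (y + u)‖ ≤ C * (u ^ s * (1 + u) ^ (-p)) := by
  obtain ⟨C, hC⟩ := exists_abs_lerchExcess_le hq hp
  have hC0 : 0 ≤ C :=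
    nonneg_of_mul_nonneg_left ((abs_nonneg _).trans (hC 1 one_pos)) (by positivity)
  refine ⟨C, fun u hu y hy ↦ ?_⟩
  calc ‖u ^ s * lerchExcess q p (y + u)‖
      = u ^ s * |lerchExcess q p (y + u)| := by
        rw [norm_mul, Real.norm_of_nonneg (by positivity), Real.norm_eq_abs]
    _ ≤ u ^ s * (C * (1 + (y + u)) ^ (-p)) := by
        gcongr
        exact hC _ (add_pos_of_nonneg_of_pos hy hu)
    _ ≤ u ^ s * (C * (1 + u) ^ (-p)) := by
        gcongr u ^ s * (C * ?_)
        exact Real.rpow_le_rpow_of_nonpos (by positivity) (by linarith) (by linarith)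
    _ = C * (u ^ s * (1 + u) ^ (-p)) := mul_left_comm _ _ _

lemma aestronglyMeasurable_rpow_mul_lerchExcess_add (hq : 0 < q) (hp : 0 < p) (s : ℝ)
    (hy : 0 ≤ y) : AEStronglyMeasurable (fun u ↦ u ^ s * lerchExcess q p (y + u))
      (volume.restrict (Ioi 0)) := by
  refine ContinuousOn.aestronglyMeasurable (fun u hu ↦ ?_) measurableSet_Ioi
  have hexcess := (continuousOn_lerchExcess hq hp).continuousAt
    (Ioi_mem_nhds (add_pos_of_nonneg_of_pos hy hu))
  exact ((Real.continuousAt_rpow_const u s (Or.inl (ne_of_gt hu))).mul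
    (hexcess.comp (f := fun u ↦ y + u) (by fun_prop))).continuousWithinAt

lemma integrableOn_rpow_mul_lerchExcess (hq : 0 < q) (hp : 0 < p) (hb : 0 < b) :
    IntegrableOn (fun u ↦ u ^ (b - 1) * lerchExcess q (p + b) u) (Ioi 0) := by
  obtain ⟨C, hC⟩ := exists_norm_rpow_mul_lerchExcess_add_le hq (add_pos hp hb) (b - 1)
  refine ((integrableOn_rpow_mul_one_add_rpow_neg hp hb).const_mul C).mono' ?_ ?_
  · simpa only [zero_add] using
      aestronglyMeasurable_rpow_mul_lerchExcess_add hq (add_pos hp hb) (b - 1) le_rfl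
  · refine (ae_restrict_iff' measurableSet_Ioi).2 (ae_of_all _ fun u hu ↦ ?_)
    simpa only [zero_add] using hC u hu 0 le_rfl

lemma tendsto_Gamma_mul_lerchExcess (hq : 0 < q) (hp : 0 < p) (hb : 0 < b) :
    Tendsto (fun y ↦ Real.Gamma b * lerchExcess q p y) (𝓝[>] 0)
      (𝓝 (∫ u in Ioi (0 : ℝ), u ^ (b - 1) * lerchExcess q (p + b) u)) := by
  obtain ⟨C, hC⟩ := exists_norm_rpow_mul_lerchExcess_add_le hq (add_pos hp hb) (b - 1)
  have hdominated : Tendsto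
      (fun y ↦ ∫ u in Ioi (0 : ℝ), u ^ (b - 1) * lerchExcess q (p + b) (y + u)) (𝓝[>] 0)
      (𝓝 (∫ u in Ioi (0 : ℝ), u ^ (b - 1) * lerchExcess q (p + b) u)) := by
    refine tendsto_integral_filter_of_dominated_convergence _ ?_ ?_
      ((integrableOn_rpow_mul_one_add_rpow_neg hp hb).const_mul C) ?_
    · filter_upwards [self_mem_nhdsWithin] with y hy using
        aestronglyMeasurable_rpow_mul_lerchExcess_add hq (add_pos hp hb) (b - 1) (le_of_lt hy)
    · filter_upwards [self_mem_nhdsWithin] with y hy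
      exact (ae_restrict_iff' measurableSet_Ioi).2 (ae_of_all _ fun u hu ↦ hC u hu y (le_of_lt hy))
    · refine (ae_restrict_iff' measurableSet_Ioi).2 (ae_of_all _ fun u hu ↦ ?_)
      have hshift : Tendsto (fun y ↦ y + u) (𝓝[>] 0) (𝓝 u) :=
        ((continuous_add_const u).tendsto' 0 u (zero_add u)).mono_left nhdsWithin_le_nhds
      exact ((hasDerivAt_lerchExcess hq (add_pos hp hb) hu).continuousAt.tendsto.comp
        hshift).const_mul _
  refine hdominated.congr' ?_
  filter_upwards [self_mem_nhdsWithin] with y hy using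
    integral_rpow_mul_lerchExcess_add hq hp hb hy

lemma integral_rpow_mul_lerchExcess_natCast_add_one (hq : 0 < q) (n : ℕ) (hb : 0 < b) :
    ∫ u in Ioi (0 : ℝ), u ^ (b - 1) * lerchExcess q (n + 1 + b) u =
      Real.Gamma b * (-Polynomial.aeval q (Polynomial.bernoulli (n + 1)) / (n + 1)) :=
  tendsto_nhds_unique (tendsto_Gamma_mul_lerchExcess hq (by positivity) hb)
    ((tendsto_lerchExcess_natCast_add_one hq n).const_mul _)

lemma rpow_mul_rpow_mul_lerchSum_div_Gamma_sub_one (q : ℝ) (hp : 0 < p) (r : ℝ) (hy : 0 < y) :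
    y ^ (-(r + 2)) * (y ^ p * lerchSum q p y / Real.Gamma p - 1) =
      (Real.Gamma p)⁻¹ * (y ^ (p - r - 1 - 1) * lerchExcess q p y) := by
  have hG : Real.Gamma p ≠ 0 := (Real.Gamma_pos_of_pos hp).ne'
  have hpow : y ^ p ≠ 0 := (Real.rpow_pos_of_pos hy p).ne'
  rw [show p - r - 1 - 1 = -(r + 2) + p by ring, Real.rpow_add hy, lerchExcess,
    Real.rpow_neg hy.le p]
  field_simp

end LerchExcess

/-- The n-th moment of the cusp density of the integer quantum Hall state on the
punctured Poincaré disk, in the cusp coordinate `y = -log|z|²`: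
`(Γ(p)/Γ(p-n-1)) ∫₀^∞ y^{-(n+2)} (yᵖ S_p(y)/Γ(p) - 1) dy = -B_{n+1}(q)/(n+1)`,
where `S_p(y) = ∑ (m+q)^{p-1} e^{-(m+q)y}` and `B_{n+1}` is the Bernoulli
polynomial with `B₁(x) = x - 1/2`. In particular the moment is independent of `p`. -/
theorem nth_moment_cusp (n : ℕ) (q p : ℝ) (hq : 0 < q) (hp : (n : ℝ) + 1 < p) :
    IntegrableOn (fun y : ℝ =>
        y ^ (-((n : ℝ) + 2)) *
          (y ^ p * (∑' m : ℕ, ((m : ℝ) + q) ^ (p - 1) * Real.exp (-(((m : ℝ) + q) * y))) /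
              Real.Gamma p - 1))
      (Set.Ioi 0) ∧
    Real.Gamma p / Real.Gamma (p - n - 1) *
        ∫ y in Set.Ioi (0 : ℝ),
          y ^ (-((n : ℝ) + 2)) *
            (y ^ p * (∑' m : ℕ, ((m : ℝ) + q) ^ (p - 1) * Real.exp (-(((m : ℝ) + q) * y))) /
                Real.Gamma p - 1)
      = -(Polynomial.aeval q (Polynomial.bernoulli (n + 1))) / ((n : ℝ) + 1) := by
  have hp0 : 0 < p := by linarith [n.cast_nonneg (α := ℝ)]
  have hb : 0 < p - n - 1 := by linarith
  have hsplit : (n : ℝ) + 1 + (p - n - 1) = p := by ring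
  have hdensity : EqOn
      (fun y ↦ y ^ (-((n : ℝ) + 2)) * (y ^ p * lerchSum q p y / Real.Gamma p - 1))
      (fun y ↦ (Real.Gamma p)⁻¹ * (y ^ (p - n - 1 - 1) * lerchExcess q p y)) (Ioi 0) :=
    fun _ hy ↦ rpow_mul_rpow_mul_lerchSum_div_Gamma_sub_one q hp0 n hy
  have hint := integrableOn_rpow_mul_lerchExcess hq (p := n + 1) (by positivity) hb
  have hmoment := integral_rpow_mul_lerchExcess_natCast_add_one hq n hb
  rw [hsplit] at hint hmoment
  refine ⟨IntegrableOn.congr_fun (hint.const_mul _) hdensity.symm measurableSet_Ioi,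
    (congrArg _ (setIntegral_congr_fun measurableSet_Ioi hdensity)).trans ?_⟩
  have hGp : Real.Gamma p ≠ 0 := (Real.Gamma_pos_of_pos hp0).ne'
  have hGb : Real.Gamma (p - n - 1) ≠ 0 := (Real.Gamma_pos_of_pos hb).ne'
  rw [integral_const_mul, hmoment]
  field_simp
end

section
/- Let q > 0 and let p > 1 be real. Then the functions y ↦ y^{−2}(y^p S_p(y)/Γ(p) − 1) and y ↦ y^{−2}(y^{p+1} S_{p+1}(y)/Γ(p+1) − 1) are both integrable on (0, ∞), and (p−1) ∫_0^∞ y^{−2}(y^p S_p(y)/Γ(p) − 1) dy = p ∫_0^∞ y^{−2}(y^{p+1} S_{p+1}(y)/Γ(p+1) − 1) dy; that is, the charge moment M_0(p) of the cusp satisfies the recursion M_0(p) = M_0(p+1). -/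
open MeasureTheory

/-- `S_p(y) = ∑_{n≥0} (n+q)^{p-1} e^{-(n+q)y}`. -/
noncomputable def cuspS (q p y : ℝ) : ℝ :=
  ∑' n : ℕ, ((n : ℝ) + q) ^ (p - 1) * Real.exp (-(((n : ℝ) + q) * y))

/-!
Comparing `S_p(y)` with `∫ x ^ (p - 1) e ^ (-xy) dx = Γ(p) / y ^ p` by the trapezoid rule, with the
remainder bounded by the integral of the absolute second derivative, shows that
`G_p(y) = y ^ p S_p(y) / Γ(p) - 1` is `O(y ^ β)` as `y → 0⁺` whenever `β ≤ 2` and `β < p`, while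
`G_p(y) → -1` as `y → ∞`. Hence `y ^ (-r - 1) G_p(y)` is integrable for `0 < r < min 2 p`. Since
`S_p' = -S_{p+1}`, the defects satisfy `y G_p' = p (G_p - G_{p+1})`, that is,
`(y ^ (-r) G_p)' = y ^ (-r - 1) ((p - r) G_p - p G_{p+1})`; the boundary values of `y ^ (-r) G_p`
vanish, so integrating gives the recursion, and the charge moment is the case `r = 1`.
-/

open Asymptotics Filter Function Set Topology

section Trapezoid

variable {E : Type*} [NormedAddCommGroup E] [NormedSpace ℝ E] {f f' f'' : ℝ → E} {a b : ℝ}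

lemma iUnion_Ioc_natCast_add (a : ℝ) : ⋃ n : ℕ, Ioc (n + a) (n + a + 1) = Ioi a := by
  ext x
  simp only [mem_iUnion, mem_Ioc, mem_Ioi]
  constructor
  · rintro ⟨n, hn, -⟩
    linarith [n.cast_nonneg (α := ℝ)]
  · intro hx
    obtain ⟨n, hn⟩ := Nat.exists_eq_add_one.2 (Nat.ceil_pos.2 (sub_pos.2 hx))
    have hceil := (Nat.ceil_eq_iff n.succ_ne_zero).1 hn
    simp only [Nat.succ_eq_add_one, add_tsub_cancel_right, Nat.cast_add, Nat.cast_one] at hceil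
    exact ⟨n, by linarith, by linarith⟩

lemma hasSum_intervalIntegral_natCast_add (hf : IntegrableOn f (Ioi a)) :
    HasSum (fun n : ℕ ↦ ∫ x in (n + a)..(n + a + 1), f x) (∫ x in Ioi a, f x) := by
  have hdisj : Pairwise (Disjoint on fun n : ℕ ↦ Ioc (n + a) (n + a + 1)) := fun m n hmn ↦ by
    simpa [onFun, add_comm a] using pairwise_disjoint_Ioc_add_intCast a (Nat.cast_injective.ne hmn)
  rw [← iUnion_Ioc_natCast_add] at hf ⊢
  simpa only [intervalIntegral.integral_of_le (lt_add_one _).le] using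
    hasSum_integral_iUnion (fun _ ↦ measurableSet_Ioc) hdisj hf

variable [CompleteSpace E]

lemma integral_eq_trapezoid_add_integral (hf : ∀ x ∈ uIcc a b, HasDerivAt f (f' x) x)
    (hf' : ∀ x ∈ uIcc a b, HasDerivAt f' (f'' x) x) (hf'' : IntervalIntegrable f'' volume a b) :
    ∫ x in a..b, f x =
      ((b - a) / 2) • (f a + f b) + ∫ x in a..b, ((x - a) * (x - b) / 2) • f'' x := by
  have hprim : ∀ x ∈ uIcc a b,
      HasDerivAt (fun x ↦ (x - (a + b) / 2) • f x - ((x - a) * (x - b) / 2) • f' x)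
        (f x - ((x - a) * (x - b) / 2) • f'' x) x := fun x hx ↦ by
    have hlin : HasDerivAt (fun x : ℝ ↦ x - (a + b) / 2) 1 x := (hasDerivAt_id x).sub_const _
    have hquad : HasDerivAt (fun x : ℝ ↦ (x - a) * (x - b) / 2) (x - (a + b) / 2) x := by
      refine ((((hasDerivAt_id x).sub_const a).mul
        ((hasDerivAt_id x).sub_const b)).div_const 2).congr_deriv ?_
      simp only [id]
      ring
    refine ((hlin.smul (hf x hx)).sub (hquad.smul (hf' x hx))).congr_deriv ?_
    module
  have hf_int : IntervalIntegrable f volume a b :=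
    ContinuousOn.intervalIntegrable fun x hx ↦ (hf x hx).continuousAt.continuousWithinAt
  have hrem : IntervalIntegrable (fun x ↦ ((x - a) * (x - b) / 2) • f'' x) volume a b :=
    hf''.continuousOn_smul (by fun_prop)
  have hftc := intervalIntegral.integral_eq_sub_of_hasDerivAt hprim (hf_int.sub hrem)
  rw [intervalIntegral.integral_sub hf_int hrem, sub_eq_iff_eq_add] at hftc
  rw [hftc]
  module

lemma norm_trapezoid_sub_integral_le (hab : a ≤ b) (hf : ∀ x ∈ Icc a b, HasDerivAt f (f' x) x)
    (hf' : ∀ x ∈ Icc a b, HasDerivAt f' (f'' x) x) (hf'' : IntervalIntegrable f'' volume a b) :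
    ‖((b - a) / 2) • (f a + f b) - ∫ x in a..b, f x‖ ≤ (b - a) ^ 2 / 8 * ∫ x in a..b, ‖f'' x‖ := by
  rw [← uIcc_of_le hab] at hf hf'
  rw [integral_eq_trapezoid_add_integral hf hf' hf'', sub_add_cancel_left, norm_neg,
    ← intervalIntegral.integral_const_mul]
  refine intervalIntegral.norm_integral_le_of_norm_le hab (.of_forall fun x hx ↦ ?_)
    (hf''.norm.const_mul _)
  rw [norm_smul]
  gcongr
  rw [Real.norm_eq_abs, abs_le]
  constructor <;> nlinarith [hx.1, hx.2, sq_nonneg (2 * x - a - b)]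

theorem norm_tsum_sub_integral_Ioi_le (hf : ∀ x ∈ Ici a, HasDerivAt f (f' x) x)
    (hf' : ∀ x ∈ Ici a, HasDerivAt f' (f'' x) x) (hf_int : IntegrableOn f (Ioi a))
    (hf''_int : IntegrableOn f'' (Ioi a)) (hsum : Summable fun n : ℕ ↦ f (n + a)) :
    ‖(∑' n : ℕ, f (n + a)) - (1 / 2 : ℝ) • f a - ∫ x in Ioi a, f x‖ ≤
      1 / 8 * ∫ x in Ioi a, ‖f'' x‖ := by
  have hshift : HasSum (fun n : ℕ ↦ f (n + a + 1)) ((∑' n : ℕ, f (n + a)) - f a) := by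
    simpa [add_right_comm] using (hasSum_nat_add_iff' 1).2 hsum.hasSum
  have htrap : HasSum (fun n : ℕ ↦ (1 / 2 : ℝ) • (f (n + a) + f (n + a + 1)) -
      ∫ x in (n + a)..(n + a + 1), f x)
      ((∑' n : ℕ, f (n + a)) - (1 / 2 : ℝ) • f a - ∫ x in Ioi a, f x) := by
    convert ((hsum.hasSum.add hshift).const_smul (1 / 2 : ℝ)).sub
      (hasSum_intervalIntegral_natCast_add hf_int) using 2
    module
  refine htrap.norm_le_of_bounded
    ((hasSum_intervalIntegral_natCast_add hf''_int.norm).mul_left (1 / 8)) fun n ↦ ?_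
  have hmem : ∀ x, (n : ℝ) + a ≤ x → x ∈ Ici a := fun x hx ↦
    le_trans (le_add_of_nonneg_left n.cast_nonneg) hx
  have hf''_n : IntervalIntegrable f'' volume (n + a) (n + a + 1) :=
    (intervalIntegrable_iff_integrableOn_Ioc_of_le (lt_add_one _).le).2 <|
      hf''_int.mono_set <| iUnion_Ioc_natCast_add a ▸ subset_iUnion_of_subset n subset_rfl
  simpa using norm_trapezoid_sub_integral_le (lt_add_one _).le (fun x hx ↦ hf x (hmem x hx.1))
    (fun x hx ↦ hf' x (hmem x hx.1)) hf''_n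

end Trapezoid

/-- The unnormalised Gamma density `x ^ (p - 1) * e ^ (-xy)` of shape `p` and rate `y`. Sampled at
`x = n + q` it is the summand of `cuspS`; integrated over `(0, ∞)` it gives `Γ(p) / y ^ p`. -/
noncomputable def gammaKernel (p y x : ℝ) : ℝ :=
  x ^ (p - 1) * Real.exp (-(x * y))

/-- The second derivative of `gammaKernel p y`, in a form which exhibits its size relative to
`gammaKernel (p - 2) y` as a polynomial in the scale-invariant variable `xy`. -/
noncomputable def gammaKernelDeriv₂ (p y x : ℝ) : ℝ :=
  ((p - 1) * (p - 2) - 2 * (p - 1) * (x * y) + (x * y) ^ 2) * gammaKernel (p - 2) y x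

section GammaKernel

variable {p r s y z x a β : ℝ}

lemma gammaKernel_nonneg (hx : 0 ≤ x) : 0 ≤ gammaKernel p y x :=
  mul_nonneg (Real.rpow_nonneg hx _) (Real.exp_nonneg _)

lemma gammaKernel_add_one (hx : x ≠ 0) : gammaKernel (p + 1) y x = x * gammaKernel p y x := by
  rw [gammaKernel, gammaKernel, add_sub_right_comm, Real.rpow_add_one hx]
  ring

lemma gammaKernel_eq_exp_mul (p y z x : ℝ) :
    gammaKernel p y x = Real.exp (-(x * (y - z))) * gammaKernel p z x := by
  rw [gammaKernel, gammaKernel, mul_left_comm, ← Real.exp_add]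
  ring_nf

lemma gammaKernel_le_rpow_mul (ha : 0 < a) (hax : a ≤ x) (hrs : r ≤ s) :
    gammaKernel r y x ≤ a ^ (r - s) * gammaKernel s y x := by
  have hx : 0 < x := ha.trans_le hax
  calc gammaKernel r y x = x ^ (r - s) * gammaKernel s y x := by
        rw [gammaKernel, gammaKernel, ← mul_assoc, ← Real.rpow_add hx]
        ring_nf
    _ ≤ a ^ (r - s) * gammaKernel s y x :=
        mul_le_mul_of_nonneg_right (Real.rpow_le_rpow_of_nonpos ha hax (sub_nonpos.2 hrs))
          (gammaKernel_nonneg hx.le)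

lemma gammaKernel_le_of_rate_le (hx : 0 ≤ x) (hyz : y ≤ z) :
    gammaKernel p z x ≤ gammaKernel p y x :=
  mul_le_mul_of_nonneg_left
    (Real.exp_le_exp.2 (neg_le_neg (mul_le_mul_of_nonneg_left hyz hx))) (Real.rpow_nonneg hx _)

lemma gammaKernel_le_rpow (hx : 0 ≤ x) (hy : 0 ≤ y) : gammaKernel p y x ≤ x ^ (p - 1) :=
  mul_le_of_le_one_right (Real.rpow_nonneg hx _)
    (Real.exp_le_one_iff.2 (neg_nonpos.2 (mul_nonneg hx hy)))

lemma hasDerivAt_gammaKernel_rate (p y : ℝ) (hx : x ≠ 0) :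
    HasDerivAt (fun y ↦ gammaKernel p y x) (-gammaKernel (p + 1) y x) y := by
  have hlin : HasDerivAt (fun y ↦ -(x * y)) (-x) y := (hasDerivAt_const_mul x).neg
  refine (hlin.exp.const_mul (x ^ (p - 1))).congr_deriv ?_
  rw [gammaKernel_add_one hx, gammaKernel]
  ring

lemma hasDerivAt_gammaKernel (p y : ℝ) (hx : x ≠ 0) :
    HasDerivAt (gammaKernel p y) ((p - 1 - x * y) * gammaKernel (p - 1) y x) x := by
  have hlin : HasDerivAt (fun x ↦ -(x * y)) (-y) x := (hasDerivAt_mul_const y).neg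
  refine ((Real.hasDerivAt_rpow_const (.inl hx)).mul hlin.exp).congr_deriv ?_
  rw [gammaKernel, Real.rpow_sub_one hx (p - 1)]
  field_simp
  ring

lemma hasDerivAt_deriv_gammaKernel (p y : ℝ) (hx : x ≠ 0) :
    HasDerivAt (fun x ↦ (p - 1 - x * y) * gammaKernel (p - 1) y x)
      (gammaKernelDeriv₂ p y x) x := by
  have hlin : HasDerivAt (fun x ↦ p - 1 - x * y) (-y) x :=
    (hasDerivAt_mul_const y).const_sub _
  refine (hlin.mul (hasDerivAt_gammaKernel (p - 1) y hx)).congr_deriv ?_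
  rw [gammaKernelDeriv₂, show p - 1 - 1 = p - 2 by ring, show p - 1 = p - 2 + 1 by ring,
    gammaKernel_add_one hx]
  ring

lemma continuousOn_gammaKernel (p y : ℝ) (ha : 0 < a) : ContinuousOn (gammaKernel p y) (Ici a) :=
  fun _ hx ↦ (hasDerivAt_gammaKernel p y (ha.trans_le hx).ne').continuousAt.continuousWithinAt

lemma isBigO_gammaKernel_exp_atTop (p : ℝ) (hy : 0 < y) :
    gammaKernel p y =O[atTop] fun x ↦ Real.exp (-(y / 2) * x) := by
  refine ((isLittleO_rpow_exp_pos_mul_atTop (p - 1) (half_pos hy)).isBigO.mul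
    (isBigO_refl (fun x ↦ Real.exp (-(x * y))) atTop)).congr_right fun x ↦ ?_
  rw [← Real.exp_add]
  ring_nf

lemma integrableOn_Ioi_gammaKernel (p : ℝ) (hy : 0 < y) (ha : 0 < a) :
    IntegrableOn (gammaKernel p y) (Ioi a) :=
  integrable_of_isBigO_exp_neg (half_pos hy) (continuousOn_gammaKernel p y ha)
    (isBigO_gammaKernel_exp_atTop p hy)

lemma integrableOn_Ioi_zero_gammaKernel (hp : 0 < p) (hy : 0 < y) :
    IntegrableOn (gammaKernel p y) (Ioi 0) := by
  unfold gammaKernel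
  simpa [mul_comm] using
    integrableOn_rpow_mul_exp_neg_mul_rpow (p := 1) (s := p - 1) (by linarith) one_pos hy

lemma integral_Ioi_gammaKernel (hp : 0 < p) (hy : 0 < y) :
    ∫ x in Ioi 0, gammaKernel p y x = y ^ (-p) * Real.Gamma p := by
  simpa [gammaKernel, mul_comm, Real.inv_rpow hy.le, Real.rpow_neg hy.le] using
    Real.integral_rpow_mul_exp_neg_mul_Ioi hp hy

lemma integral_Ioc_gammaKernel_le (hp : 0 < p) (hy : 0 < y) (ha : 0 ≤ a) :
    ∫ x in Ioc 0 a, gammaKernel p y x ≤ a ^ p / p := by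
  have hpow : IntegrableOn (fun x : ℝ ↦ x ^ (p - 1)) (Ioc 0 a) :=
    (intervalIntegrable_iff_integrableOn_Ioc_of_le ha).1
      (intervalIntegral.intervalIntegrable_rpow' (by linarith))
  calc ∫ x in Ioc 0 a, gammaKernel p y x ≤ ∫ x in Ioc 0 a, x ^ (p - 1) :=
        setIntegral_mono_on
          ((integrableOn_Ioi_zero_gammaKernel hp hy).mono_set Ioc_subset_Ioi_self) hpow
          measurableSet_Ioc fun x hx ↦ gammaKernel_le_rpow hx.1.le hy.le
    _ = a ^ p / p := by
        rw [← intervalIntegral.integral_of_le ha, integral_rpow (.inl (by linarith)),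
          sub_add_cancel, Real.zero_rpow hp.ne', sub_zero]

lemma summable_gammaKernel_natCast_add (p a : ℝ) (hy : 0 < y) :
    Summable fun n : ℕ ↦ gammaKernel p y (n + a) := by
  have htop : Tendsto (fun n : ℕ ↦ (n : ℝ) + a) atTop atTop :=
    tendsto_atTop_add_const_right _ a tendsto_natCast_atTop_atTop
  refine summable_of_isBigO_nat ?_ ((isBigO_gammaKernel_exp_atTop p hy).comp_tendsto htop)
  simp only [comp_def, mul_add, Real.exp_add]
  refine Summable.mul_right _ ?_
  simpa only [mul_comm] using Real.summable_exp_nat_mul_iff.2 (neg_lt_zero.2 (half_pos hy))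

lemma abs_quadratic_le_mul_exp_half (b c : ℝ) {u : ℝ} (hu : 0 ≤ u) :
    |c - b * u + u ^ 2| ≤ (|c| + 2 * |b| + 8) * Real.exp (u / 2) := by
  have hexp : 1 + u / 2 + (u / 2) ^ 2 / 2 ≤ Real.exp (u / 2) :=
    Real.quadratic_le_exp_of_nonneg (by positivity)
  have hone : 1 ≤ Real.exp (u / 2) := by nlinarith
  have hlin : u ≤ 2 * Real.exp (u / 2) := by nlinarith
  have hquad : u ^ 2 ≤ 8 * Real.exp (u / 2) := by nlinarith
  calc |c - b * u + u ^ 2| ≤ |c| + |b| * u + u ^ 2 := by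
        refine (abs_add_le _ _).trans ?_
        rw [abs_of_nonneg (sq_nonneg u), ← abs_of_nonneg hu, ← abs_mul, abs_of_nonneg hu]
        gcongr
        exact abs_sub _ _
    _ ≤ |c| * Real.exp (u / 2) + |b| * (2 * Real.exp (u / 2)) + 8 * Real.exp (u / 2) := by
        gcongr
        exact le_mul_of_one_le_right (abs_nonneg c) hone
    _ = (|c| + 2 * |b| + 8) * Real.exp (u / 2) := by ring

-- Half of the exponential decay absorbs the polynomial in `x * y`.
lemma exists_abs_gammaKernelDeriv₂_le (p : ℝ) (ha : 0 < a) (hβ : β ≤ 2) :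
    ∃ C ≥ 0, ∀ y ≥ 0, ∀ x ≥ a, |gammaKernelDeriv₂ p y x| ≤ C * gammaKernel (p - β) (y / 2) x := by
  set M := |(p - 1) * (p - 2)| + 2 * |2 * (p - 1)| + 8
  refine ⟨M * a ^ (β - 2), by positivity, fun y hy x hax ↦ ?_⟩
  have hx : 0 < x := ha.trans_le hax
  calc |gammaKernelDeriv₂ p y x|
      ≤ M * Real.exp (x * y / 2) * gammaKernel (p - 2) y x := by
        rw [gammaKernelDeriv₂, abs_mul, abs_of_nonneg (gammaKernel_nonneg hx.le)]
        exact mul_le_mul_of_nonneg_right (abs_quadratic_le_mul_exp_half _ _ (by positivity))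
          (gammaKernel_nonneg hx.le)
    _ = M * gammaKernel (p - 2) (y / 2) x := by
        rw [gammaKernel_eq_exp_mul _ (y / 2) y]
        ring_nf
    _ ≤ M * (a ^ (p - 2 - (p - β)) * gammaKernel (p - β) (y / 2) x) := by
        gcongr
        exact gammaKernel_le_rpow_mul ha hax (by linarith)
    _ = M * a ^ (β - 2) * gammaKernel (p - β) (y / 2) x := by
        rw [sub_sub_sub_cancel_left, mul_assoc]

lemma integrableOn_Ioi_gammaKernelDeriv₂ (p : ℝ) (hy : 0 < y) (ha : 0 < a) :
    IntegrableOn (gammaKernelDeriv₂ p y) (Ioi a) := by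
  have hcont : ContinuousOn (gammaKernelDeriv₂ p y) (Ioi a) :=
    ContinuousOn.mul (by fun_prop) ((continuousOn_gammaKernel _ y ha).mono Ioi_subset_Ici_self)
  obtain ⟨C, -, hC⟩ := exists_abs_gammaKernelDeriv₂_le p ha le_rfl
  refine ((integrableOn_Ioi_gammaKernel (p - 2) (half_pos hy) ha).const_mul C).mono'
    (hcont.aestronglyMeasurable measurableSet_Ioi) ?_
  filter_upwards [ae_restrict_mem measurableSet_Ioi] with x hx
  exact hC y hy.le x (le_of_lt hx)

lemma exists_integral_abs_gammaKernelDeriv₂_le (ha : 0 < a) (hβ : β ≤ 2) (hβp : β < p) :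
    ∃ C, ∀ y > 0, ∫ x in Ioi a, |gammaKernelDeriv₂ p y x| ≤ C * y ^ (β - p) := by
  obtain ⟨C, hC0, hC⟩ := exists_abs_gammaKernelDeriv₂_le p ha hβ
  refine ⟨C * (2 ^ (p - β) * Real.Gamma (p - β)), fun y hy ↦ ?_⟩
  have hint : IntegrableOn (fun x ↦ C * gammaKernel (p - β) (y / 2) x) (Ioi 0) :=
    (integrableOn_Ioi_zero_gammaKernel (sub_pos.2 hβp) (half_pos hy)).const_mul C
  have hsub : Ioi a ⊆ Ioi 0 := Ioi_subset_Ioi ha.le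
  calc ∫ x in Ioi a, |gammaKernelDeriv₂ p y x|
      ≤ ∫ x in Ioi a, C * gammaKernel (p - β) (y / 2) x :=
        setIntegral_mono_on (integrableOn_Ioi_gammaKernelDeriv₂ p hy ha).abs (hint.mono_set hsub)
          measurableSet_Ioi fun x hx ↦ hC y hy.le x (le_of_lt hx)
    _ ≤ ∫ x in Ioi 0, C * gammaKernel (p - β) (y / 2) x :=
        setIntegral_mono_set hint (ae_restrict_of_forall_mem measurableSet_Ioi fun x hx ↦
          mul_nonneg hC0 (gammaKernel_nonneg (le_of_lt hx))) hsub.eventuallyLE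
    _ = C * (2 ^ (p - β) * Real.Gamma (p - β)) * y ^ (β - p) := by
        rw [integral_const_mul, integral_Ioi_gammaKernel (sub_pos.2 hβp) (half_pos hy),
          Real.div_rpow hy.le zero_le_two, Real.rpow_neg zero_le_two, neg_sub, div_inv_eq_mul]
        ring

end GammaKernel

section CuspS

variable {q p y β : ℝ}

lemma cuspS_eq_tsum_gammaKernel (q p y : ℝ) : cuspS q p y = ∑' n : ℕ, gammaKernel p y (n + q) :=
  rfl

lemma hasDerivAt_cuspS (p : ℝ) (hq : 0 < q) (hy : 0 < y) :
    HasDerivAt (cuspS q p) (-cuspS q (p + 1) y) y := by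
  have hpos : ∀ n : ℕ, 0 < (n : ℝ) + q := fun n ↦ by positivity
  rw [cuspS_eq_tsum_gammaKernel, ← tsum_neg]
  refine hasDerivAt_tsum_of_isPreconnected (t := Ioi (y / 2)) (y₀ := y)
    (summable_gammaKernel_natCast_add (p + 1) q (half_pos hy)) isOpen_Ioi isPreconnected_Ioi
    (fun n z _ ↦ hasDerivAt_gammaKernel_rate p z (hpos n).ne') (fun n z hz ↦ ?_)
    (half_lt_self hy) (summable_gammaKernel_natCast_add p q hy) (half_lt_self hy)
  rw [norm_neg, Real.norm_of_nonneg (gammaKernel_nonneg (hpos n).le)]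
  exact gammaKernel_le_of_rate_le (hpos n).le (le_of_lt hz)

lemma cuspS_le_exp_mul_cuspS_one (p : ℝ) (hq : 0 < q) (hy : 1 ≤ y) :
    cuspS q p y ≤ Real.exp (-(q * (y - 1))) * cuspS q p 1 := by
  simp only [cuspS_eq_tsum_gammaKernel, ← tsum_mul_left]
  refine (summable_gammaKernel_natCast_add p q (by linarith)).tsum_le_tsum (fun n ↦ ?_)
    ((summable_gammaKernel_natCast_add p q one_pos).mul_left _)
  rw [gammaKernel_eq_exp_mul p y 1]
  have hn : q ≤ n + q := le_add_of_nonneg_left n.cast_nonneg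
  have hnonneg : 0 ≤ gammaKernel p 1 (n + q) := gammaKernel_nonneg (hq.le.trans hn)
  gcongr

lemma tendsto_rpow_mul_cuspS_atTop (p : ℝ) (hq : 0 < q) :
    Tendsto (fun y ↦ y ^ p * cuspS q p y) atTop (𝓝 0) := by
  have hmajorant : Tendsto (fun y ↦ y ^ p * Real.exp (-q * y) * (Real.exp q * cuspS q p 1)) atTop
      (𝓝 0) := by
    simpa using (tendsto_rpow_mul_exp_neg_mul_atTop_nhds_zero p q hq).mul_const _
  refine squeeze_zero' ?_ ?_ hmajorant
  · filter_upwards [eventually_ge_atTop 0] with y hy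
    exact mul_nonneg (Real.rpow_nonneg hy p)
      (tsum_nonneg fun n ↦ gammaKernel_nonneg (by positivity))
  · filter_upwards [eventually_ge_atTop 1] with y hy
    have hexp : Real.exp (-(q * (y - 1))) = Real.exp (-q * y) * Real.exp q := by
      rw [← Real.exp_add]
      ring_nf
    calc y ^ p * cuspS q p y ≤ y ^ p * (Real.exp (-(q * (y - 1))) * cuspS q p 1) := by
          gcongr
          exact cuspS_le_exp_mul_cuspS_one p hq hy
      _ = y ^ p * Real.exp (-q * y) * (Real.exp q * cuspS q p 1) := by
          rw [hexp]
          ring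

lemma abs_cuspS_sub_le (hq : 0 < q) (hp : 0 < p) (hy : 0 < y) :
    |cuspS q p y - y ^ (-p) * Real.Gamma p| ≤
      q ^ (p - 1) / 2 + q ^ p / p + 1 / 8 * ∫ x in Ioi q, |gammaKernelDeriv₂ p y x| := by
  have hne : ∀ x ∈ Ici q, x ≠ 0 := fun x hx ↦ (hq.trans_le hx).ne'
  have htrap := norm_tsum_sub_integral_Ioi_le (a := q)
    (fun x hx ↦ hasDerivAt_gammaKernel p y (hne x hx))
    (fun x hx ↦ hasDerivAt_deriv_gammaKernel p y (hne x hx))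
    (integrableOn_Ioi_gammaKernel p hy hq) (integrableOn_Ioi_gammaKernelDeriv₂ p hy hq)
    (summable_gammaKernel_natCast_add p q hy)
  simp only [← cuspS_eq_tsum_gammaKernel, smul_eq_mul, Real.norm_eq_abs] at htrap
  have hGamma : y ^ (-p) * Real.Gamma p =
      (∫ x in Ioc 0 q, gammaKernel p y x) + ∫ x in Ioi q, gammaKernel p y x := by
    rw [← integral_Ioi_gammaKernel hp hy, ← Ioc_union_Ioi_eq_Ioi hq.le,
      setIntegral_union (Ioc_disjoint_Ioi le_rfl) measurableSet_Ioi
        ((integrableOn_Ioi_zero_gammaKernel hp hy).mono_set Ioc_subset_Ioi_self)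
        (integrableOn_Ioi_gammaKernel p hy hq)]
  have hfirst_nonneg : 0 ≤ gammaKernel p y q := gammaKernel_nonneg hq.le
  have hfirst_le : gammaKernel p y q ≤ q ^ (p - 1) := gammaKernel_le_rpow hq.le hy.le
  have hhead_nonneg : 0 ≤ ∫ x in Ioc 0 q, gammaKernel p y x :=
    setIntegral_nonneg measurableSet_Ioc fun x hx ↦ gammaKernel_nonneg hx.1.le
  have hhead_le : ∫ x in Ioc 0 q, gammaKernel p y x ≤ q ^ p / p :=
    integral_Ioc_gammaKernel_le hp hy hq.le
  rw [abs_le] at htrap ⊢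
  constructor <;> linarith [htrap.1, htrap.2]

lemma isBigO_cuspS_sub (hq : 0 < q) (hp : 0 < p) (hβ : β ≤ 2) (hβp : β < p) :
    (fun y ↦ cuspS q p y - y ^ (-p) * Real.Gamma p) =O[𝓝[>] 0] fun y ↦ y ^ (β - p) := by
  obtain ⟨C, hC⟩ := exists_integral_abs_gammaKernelDeriv₂_le hq hβ hβp
  refine .of_bound (q ^ (p - 1) / 2 + q ^ p / p + 1 / 8 * C) ?_
  filter_upwards [Ioc_mem_nhdsGT one_pos] with y ⟨hy0, hy1⟩
  have hone : 1 ≤ y ^ (β - p) := Real.one_le_rpow_of_pos_of_le_one_of_nonpos hy0 hy1 (by linarith)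
  rw [Real.norm_eq_abs, Real.norm_of_nonneg (by positivity)]
  calc |cuspS q p y - y ^ (-p) * Real.Gamma p|
      ≤ (q ^ (p - 1) / 2 + q ^ p / p) * 1 + 1 / 8 * ∫ x in Ioi q, |gammaKernelDeriv₂ p y x| := by
        rw [mul_one]
        exact abs_cuspS_sub_le hq hp hy0
    _ ≤ (q ^ (p - 1) / 2 + q ^ p / p) * y ^ (β - p) + 1 / 8 * (C * y ^ (β - p)) := by
        gcongr
        exact hC y hy0
    _ = (q ^ (p - 1) / 2 + q ^ p / p + 1 / 8 * C) * y ^ (β - p) := by ring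

end CuspS

/-- The relative deviation `y ^ p S_p(y) / Γ(p) - 1` of `S_p(y)` from its leading behaviour
`Γ(p) / y ^ p` at `y = 0`; the charge moment is `p - 1` times its Mellin transform at `-1`. -/
noncomputable def cuspDefect (q p y : ℝ) : ℝ :=
  y ^ p * cuspS q p y / Real.Gamma p - 1

section CuspDefect

variable {q p r y β : ℝ}

lemma hasDerivAt_cuspDefect (hq : 0 < q) (hp : p ≠ 0) (hy : 0 < y) :
    HasDerivAt (cuspDefect q p) (p * (y⁻¹ * (cuspDefect q p y - cuspDefect q (p + 1) y))) y := by
  refine ((((Real.hasDerivAt_rpow_const (.inl hy.ne')).mul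
    (hasDerivAt_cuspS p hq hy)).div_const _).sub_const 1).congr_deriv ?_
  rw [cuspDefect, cuspDefect, Real.Gamma_add_one hp, Real.rpow_sub_one hy.ne',
    Real.rpow_add_one hy.ne']
  field_simp
  ring

lemma locallyIntegrableOn_cuspDefect (hq : 0 < q) (hp : p ≠ 0) :
    LocallyIntegrableOn (cuspDefect q p) (Ioi 0) :=
  ContinuousOn.locallyIntegrableOn
    (fun _ hy ↦ (hasDerivAt_cuspDefect hq hp hy).continuousAt.continuousWithinAt) measurableSet_Ioi

lemma tendsto_cuspDefect_atTop (p : ℝ) (hq : 0 < q) :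
    Tendsto (cuspDefect q p) atTop (𝓝 (-1)) := by
  unfold cuspDefect
  simpa using ((tendsto_rpow_mul_cuspS_atTop p hq).div_const (Real.Gamma p)).sub_const 1

lemma isBigO_cuspDefect_zero (hq : 0 < q) (hp : 0 < p) (hβ : β ≤ 2) (hβp : β < p) :
    cuspDefect q p =O[𝓝[>] 0] fun y ↦ y ^ β := by
  have hmul := ((isBigO_refl (fun y : ℝ ↦ y ^ p) (𝓝[>] 0)).mul
    (isBigO_cuspS_sub hq hp hβ hβp)).const_mul_left (Real.Gamma p)⁻¹
  refine hmul.congr' ?_ ?_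
  · filter_upwards [self_mem_nhdsWithin] with y (hy : 0 < y)
    have hΓ := (Real.Gamma_pos_of_pos hp).ne'
    rw [cuspDefect, Real.rpow_neg hy.le]
    field_simp
  · filter_upwards [self_mem_nhdsWithin] with y (hy : 0 < y)
    rw [← Real.rpow_add hy, add_sub_cancel]

lemma integrableOn_rpow_mul_cuspDefect (hq : 0 < q) (hr : 0 < r) (hr2 : r < 2) (hrp : r < p) :
    IntegrableOn (fun y ↦ y ^ (-(r + 1)) * cuspDefect q p y) (Ioi 0) := by
  have hp : 0 < p := hr.trans hrp
  obtain ⟨β, hrβ, hβ⟩ := exists_between (lt_min hr2 hrp)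
  obtain ⟨hβ2, hβp⟩ := lt_min_iff.1 hβ
  have htop : cuspDefect q p =O[atTop] fun y ↦ y ^ (-(0 : ℝ)) := by
    simpa using (tendsto_cuspDefect_atTop p hq).isBigO_one ℝ
  have hzero : cuspDefect q p =O[𝓝[>] 0] fun y ↦ y ^ (-(-β)) := by
    simpa using isBigO_cuspDefect_zero hq hp hβ2.le hβp
  simpa only [neg_add'] using mellin_convergent_of_isBigO_scalar
    (locallyIntegrableOn_cuspDefect hq hp.ne') htop (neg_lt_zero.2 hr) hzero (neg_lt_neg hrβ)

lemma tendsto_rpow_mul_cuspDefect_zero (hq : 0 < q) (hp : 0 < p) (hr2 : r < 2) (hrp : r < p) :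
    Tendsto (fun y ↦ y ^ (-r) * cuspDefect q p y) (𝓝[>] 0) (𝓝 0) := by
  obtain ⟨β, hrβ, hβ⟩ := exists_between (lt_min hr2 hrp)
  obtain ⟨hβ2, hβp⟩ := lt_min_iff.1 hβ
  have hbound : (fun y ↦ y ^ (-r) * cuspDefect q p y) =O[𝓝[>] 0] fun y ↦ y ^ (β - r) := by
    refine ((isBigO_refl (fun y : ℝ ↦ y ^ (-r)) _).mul
      (isBigO_cuspDefect_zero hq hp hβ2.le hβp)).congr' .rfl ?_
    filter_upwards [self_mem_nhdsWithin] with y (hy : 0 < y)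
    rw [← Real.rpow_add hy, neg_add_eq_sub]
  have hpow : Tendsto (fun y : ℝ ↦ y ^ (β - r)) (𝓝[>] 0) (𝓝 0) := by
    simpa [Real.zero_rpow (sub_pos.2 hrβ).ne'] using
      (Real.continuousAt_rpow_const 0 (β - r) (.inr (sub_pos.2 hrβ).le)).tendsto.mono_left
        nhdsWithin_le_nhds
  exact hbound.trans_tendsto hpow

lemma tendsto_rpow_mul_cuspDefect_atTop (p : ℝ) (hq : 0 < q) (hr : 0 < r) :
    Tendsto (fun y ↦ y ^ (-r) * cuspDefect q p y) atTop (𝓝 0) := by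
  simpa using (tendsto_rpow_neg_atTop hr).mul (tendsto_cuspDefect_atTop p hq)

lemma hasDerivAt_rpow_mul_cuspDefect (r : ℝ) (hq : 0 < q) (hp : p ≠ 0) (hy : 0 < y) :
    HasDerivAt (fun y ↦ y ^ (-r) * cuspDefect q p y)
      ((p - r) * (y ^ (-(r + 1)) * cuspDefect q p y) -
        p * (y ^ (-(r + 1)) * cuspDefect q (p + 1) y)) y := by
  refine ((Real.hasDerivAt_rpow_const (.inl hy.ne')).mul
    (hasDerivAt_cuspDefect hq hp hy)).congr_deriv ?_
  rw [neg_add', Real.rpow_sub_one hy.ne']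
  ring

end CuspDefect

theorem charge_moment_recursion_general (q p r : ℝ) (hq : 0 < q) (hr : 0 < r) (hr2 : r < 2)
    (hrp : r < p) :
    IntegrableOn (fun y ↦ y ^ (-(r + 1)) * cuspDefect q p y) (Ioi 0) ∧
    IntegrableOn (fun y ↦ y ^ (-(r + 1)) * cuspDefect q (p + 1) y) (Ioi 0) ∧
    (p - r) * ∫ y in Ioi 0, y ^ (-(r + 1)) * cuspDefect q p y
      = p * ∫ y in Ioi 0, y ^ (-(r + 1)) * cuspDefect q (p + 1) y := by
  have hp : 0 < p := hr.trans hrp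
  have hint := integrableOn_rpow_mul_cuspDefect hq hr hr2 hrp
  have hint_succ := integrableOn_rpow_mul_cuspDefect hq hr hr2 (hrp.trans (lt_add_one p))
  refine ⟨hint, hint_succ, ?_⟩
  -- The junk value `0 ^ (-r) = 0` makes the antiderivative right-continuous at `0`.
  have hzero : (0 : ℝ) ^ (-r) * cuspDefect q p 0 = 0 := by
    rw [Real.zero_rpow (neg_ne_zero.2 hr.ne'), zero_mul]
  have hcont : ContinuousWithinAt (fun y ↦ y ^ (-r) * cuspDefect q p y) (Ici 0) 0 := by
    rw [← continuousWithinAt_Ioi_iff_Ici, ContinuousWithinAt, hzero]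
    exact tendsto_rpow_mul_cuspDefect_zero hq hp hr2 hrp
  have hftc := integral_Ioi_of_hasDerivAt_of_tendsto hcont
    (fun y hy ↦ hasDerivAt_rpow_mul_cuspDefect r hq hp.ne' hy)
    ((hint.const_mul _).sub (hint_succ.const_mul _)) (tendsto_rpow_mul_cuspDefect_atTop p hq hr)
  rw [integral_sub (hint.const_mul _) (hint_succ.const_mul _), integral_const_mul,
    integral_const_mul, hzero, sub_zero] at hftc
  exact sub_eq_zero.1 hftc

/-- Recursion for the charge moment of the cusp: `M₀(p) = M₀(p+1)` where
`M₀(p) = (p-1) ∫₀^∞ y^{-2} (yᵖ S_p(y)/Γ(p) - 1) dy`. -/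
theorem charge_moment_recursion (q p : ℝ) (hq : 0 < q) (hp : 1 < p) :
    IntegrableOn (fun y : ℝ => y ^ (-(2 : ℝ)) * (y ^ p * cuspS q p y / Real.Gamma p - 1))
      (Set.Ioi 0) ∧
    IntegrableOn (fun y : ℝ =>
        y ^ (-(2 : ℝ)) * (y ^ (p + 1) * cuspS q (p + 1) y / Real.Gamma (p + 1) - 1))
      (Set.Ioi 0) ∧
    (p - 1) * ∫ y in Set.Ioi (0 : ℝ), y ^ (-(2 : ℝ)) * (y ^ p * cuspS q p y / Real.Gamma p - 1)
      = p * ∫ y in Set.Ioi (0 : ℝ),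
          y ^ (-(2 : ℝ)) * (y ^ (p + 1) * cuspS q (p + 1) y / Real.Gamma (p + 1) - 1) := by
  simpa only [one_add_one_eq_two, cuspDefect] using
    charge_moment_recursion_general q p 1 hq one_pos one_lt_two hp
end
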